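/- (Sufficiency of the CAP structure for ∞-step linear prediction.) If a discrete-time controlled system x⁺ = f(x,u) admits a control-affine preserved (CAP) structure, then it admits an N-step linear predictor for every N ≥ 1. -/

import Mathlib

open Matrix

noncomputable section

/-- The `N`-step iterated dynamics `f_N`. -/
def iterDyn {ι : Type} {m : ℕ} (f : (ι → ℝ) → (Fin m → ℝ) → (ι → ℝ)) :
    (N : ℕ) → (ι → ℝ) → (Fin N → (Fin m → ℝ)) → (ι → ℝ)
  | 0, x, _ => x
  | N + 1, x, u => f (iterDyn f N x (fun i => u i.castSucc)) (u (Fin.last N))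

/-- The system `x⁺ = f(x,u)` admits an `N`-step linear predictor on `X`, `U`. -/
def HasNStepLinearPredictor {ι : Type} [Fintype ι] {m : ℕ}
    (f : (ι → ℝ) → (Fin m → ℝ) → (ι → ℝ))
    (X : Set (ι → ℝ)) (U : Set (Fin m → ℝ)) (N : ℕ) : Prop :=
  ∃ (Φ : (ι → ℝ) → (ι → ℝ)) (B : Matrix ι (Fin N × Fin m) ℝ),
    ∀ x ∈ X, ∀ u : Fin N → (Fin m → ℝ), (∀ i, u i ∈ U) →
      iterDyn f N x u = Φ x + B.mulVec (fun p => u p.1 p.2)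

/-- The system admits a control-affine preserved (CAP) structure. -/
def HasCAP {ι : Type} [Fintype ι] [DecidableEq ι] {m : ℕ}
    (f : (ι → ℝ) → (Fin m → ℝ) → (ι → ℝ))
    (X : Set (ι → ℝ)) (U : Set (Fin m → ℝ)) : Prop :=
  ∃ (n₁ n₂ : ℕ) (T : Matrix (Fin n₁ ⊕ Fin n₂) ι ℝ) (S : Matrix ι (Fin n₁ ⊕ Fin n₂) ℝ),
    T * S = 1 ∧ S * T = 1 ∧
    ∃ (g : (Fin n₂ → ℝ) → (Fin n₁ → ℝ)) (h : (Fin n₂ → ℝ) → (Fin n₂ → ℝ))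
      (C : Matrix (Fin n₁) (Fin n₁) ℝ) (D : Matrix (Fin n₁) (Fin m) ℝ),
      ∀ x ∈ X, ∀ u ∈ U,
        T.mulVec (f x u) =
          Sum.elim
            (g (fun i => T.mulVec x (Sum.inr i)) +
              C.mulVec (fun i => T.mulVec x (Sum.inl i)) + D.mulVec u)
            (h (fun i => T.mulVec x (Sum.inr i)))

/-!
Let `x̃₁, x̃₂` be the two blocks of coordinates of the CAP structure. The block `x̃₂` evolves
autonomously, so after `k` steps it is `h^k x̃₂`, whatever the inputs. Then `x̃₁` obeys a linear
recursion driven by `g (h^k x̃₂) + D u_k`, and variation of constants gives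

  `x̃₁(N) = C^N x̃₁ + ∑_{k < N} C^(N-1-k) (g (h^k x̃₂) + D u_k)`,

whose dependence on the inputs is linear with a matrix that does not involve the initial state.
The coordinates themselves may depend on the state in any way, provided that the state is recovered
from them by a map that is affine in `x̃₁` with a constant linear part.
-/

section Reachability

variable {R κ μ : Type*} [Semiring R] [Fintype κ] [DecidableEq κ]

theorem sum_pow_rev_mulVec_succ (C : Matrix κ κ R) {N : ℕ} (w : Fin (N + 1) → κ → R) :
    ∑ k, C ^ (k.rev : ℕ) *ᵥ w k =
      C *ᵥ ∑ k : Fin N, C ^ (k.rev : ℕ) *ᵥ w k.castSucc + w (Fin.last N) := by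
  simp only [Fin.sum_univ_castSucc, Fin.rev_castSucc, Fin.val_succ, Fin.rev_last, Fin.val_zero,
    pow_zero, Matrix.one_mulVec, pow_succ', Matrix.mulVec_sum, Matrix.mulVec_mulVec]

/-- The `N`-step reachability matrix `[C ^ (N - 1) * D, …, C * D, D]` of the linear system
`z⁺ = C z + D u`, which maps the stacked inputs to the state reached from `0`. The exponent
`N - 1 - k` of the `k`-th block is `k.rev`. -/
def reachabilityMatrix (C : Matrix κ κ R) (D : Matrix κ μ R) (N : ℕ) : Matrix κ (Fin N × μ) R :=
  Matrix.of fun i p => (C ^ (p.1.rev : ℕ) * D) i p.2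

theorem reachabilityMatrix_mulVec [Fintype μ] (C : Matrix κ κ R) (D : Matrix κ μ R) {N : ℕ}
    (u : Fin N → μ → R) :
    reachabilityMatrix C D N *ᵥ (fun p => u p.1 p.2) =
      ∑ k, C ^ (k.rev : ℕ) *ᵥ (D *ᵥ u k) := by
  ext i
  simp [reachabilityMatrix, Matrix.mulVec_mulVec, Matrix.mulVec, dotProduct,
    Fintype.sum_prod_type]

end Reachability

/-- Coordinates `fst x`, `snd x` of the states `x ∈ X` in which the system `x⁺ = f(x,u)` has the
control-affine preserved form, with the notation `g, h, C, D` of the CAP structure. In contrast to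
`HasCAP`, the coordinates may be nonlinear and redundant, and the second one need not be a vector;
the state must only be recovered as `x = S (fst x) + r (snd x)`. -/
structure CAPLift {ι : Type} {m : ℕ} (f : (ι → ℝ) → (Fin m → ℝ) → (ι → ℝ))
    (X : Set (ι → ℝ)) (U : Set (Fin m → ℝ)) (κ β : Type*) [Fintype κ] where
  fst : (ι → ℝ) → (κ → ℝ)
  snd : (ι → ℝ) → β
  g : β → (κ → ℝ)
  h : β → β
  C : Matrix κ κ ℝ
  D : Matrix κ (Fin m) ℝ
  S : Matrix ι κ ℝ
  r : β → (ι → ℝ)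
  fst_step : ∀ x ∈ X, ∀ u ∈ U, fst (f x u) = g (snd x) + C *ᵥ fst x + D *ᵥ u
  snd_step : ∀ x ∈ X, ∀ u ∈ U, snd (f x u) = h (snd x)
  readout : ∀ x ∈ X, x = S *ᵥ fst x + r (snd x)

section Trajectory

variable {ι : Type} {m : ℕ} {f : (ι → ℝ) → (Fin m → ℝ) → (ι → ℝ)}
  {X : Set (ι → ℝ)} {U : Set (Fin m → ℝ)}

theorem iterDyn_mem (hf : ∀ x ∈ X, ∀ u ∈ U, f x u ∈ X) {N : ℕ} {x : ι → ℝ} (hx : x ∈ X)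
    {u : Fin N → Fin m → ℝ} (hu : ∀ k, u k ∈ U) : iterDyn f N x u ∈ X := by
  induction N with
  | zero => exact hx
  | succ N ih => exact hf _ (ih fun k => hu k.castSucc) _ (hu _)

namespace CAPLift

variable {κ β : Type*} [Fintype κ] (L : CAPLift f X U κ β)

theorem snd_iterDyn (hf : ∀ x ∈ X, ∀ u ∈ U, f x u ∈ X) {N : ℕ} {x : ι → ℝ} (hx : x ∈ X)
    {u : Fin N → Fin m → ℝ} (hu : ∀ k, u k ∈ U) :
    L.snd (iterDyn f N x u) = L.h^[N] (L.snd x) := by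
  induction N with
  | zero => rfl
  | succ N ih =>
    have hu' : ∀ k : Fin N, u k.castSucc ∈ U := fun k => hu k.castSucc
    rw [iterDyn, L.snd_step _ (iterDyn_mem hf hx hu') _ (hu _), ih hu',
      Function.iterate_succ_apply']

theorem fst_iterDyn [DecidableEq κ] (hf : ∀ x ∈ X, ∀ u ∈ U, f x u ∈ X) {N : ℕ} {x : ι → ℝ}
    (hx : x ∈ X) {u : Fin N → Fin m → ℝ} (hu : ∀ k, u k ∈ U) :
    L.fst (iterDyn f N x u) = L.C ^ N *ᵥ L.fst x +
      ∑ k : Fin N, L.C ^ (k.rev : ℕ) *ᵥ (L.g (L.h^[k] (L.snd x)) + L.D *ᵥ u k) := by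
  induction N with
  | zero => simp [iterDyn]
  | succ N ih =>
    have hu' : ∀ k : Fin N, u k.castSucc ∈ U := fun k => hu k.castSucc
    rw [iterDyn, L.fst_step _ (iterDyn_mem hf hx hu') _ (hu _), L.snd_iterDyn hf hx hu', ih hu',
      sum_pow_rev_mulVec_succ, Matrix.mulVec_add, Matrix.mulVec_mulVec, ← pow_succ']
    simp only [Fin.val_castSucc, Fin.val_last]
    abel

end CAPLift

end Trajectory

theorem HasCAP.exists_capLift {ι : Type} [Fintype ι] [DecidableEq ι] {m : ℕ}
    {f : (ι → ℝ) → (Fin m → ℝ) → (ι → ℝ)} {X : Set (ι → ℝ)} {U : Set (Fin m → ℝ)}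
    (hcap : HasCAP f X U) :
    ∃ n₁ n₂ : ℕ, Nonempty (CAPLift f X U (Fin n₁) (Fin n₂ → ℝ)) := by
  obtain ⟨n₁, n₂, T, S, -, hST, g, h, C, D, hT⟩ := hcap
  refine ⟨n₁, n₂, ⟨{
    fst := fun x => (T *ᵥ x) ∘ Sum.inl
    snd := fun x => (T *ᵥ x) ∘ Sum.inr
    g, h, C, D
    S := S.toCols₁
    r := fun z => S.toCols₂ *ᵥ z
    fst_step := fun x hx u hu => by rw [hT x hx u hu]; rfl
    snd_step := fun x hx u hu => by rw [hT x hx u hu]; rfl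
    readout := fun x _ => ?_ }⟩⟩
  calc x = S *ᵥ (T *ᵥ x) := by rw [Matrix.mulVec_mulVec, hST, Matrix.one_mulVec]
    _ = Matrix.fromCols S.toCols₁ S.toCols₂ *ᵥ (T *ᵥ x) := by rw [Matrix.fromCols_toCols]
    _ = S.toCols₁ *ᵥ ((T *ᵥ x) ∘ Sum.inl) + S.toCols₂ *ᵥ ((T *ᵥ x) ∘ Sum.inr) :=
        Matrix.fromCols_mulVec ..

theorem CAP_implies_infinite_step_linear_prediction_general {ι : Type} [Fintype ι] {m : ℕ}
    {f : (ι → ℝ) → (Fin m → ℝ) → (ι → ℝ)} {X : Set (ι → ℝ)} {U : Set (Fin m → ℝ)}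
    {κ β : Type*} [Fintype κ] (hf : ∀ x ∈ X, ∀ u ∈ U, f x u ∈ X) (L : CAPLift f X U κ β)
    (N : ℕ) : HasNStepLinearPredictor f X U N := by
  classical
  let freeFst (x : ι → ℝ) : κ → ℝ :=
    L.C ^ N *ᵥ L.fst x + ∑ k : Fin N, L.C ^ (k.rev : ℕ) *ᵥ L.g (L.h^[k] (L.snd x))
  refine ⟨fun x => L.S *ᵥ freeFst x + L.r (L.h^[N] (L.snd x)),
    L.S * reachabilityMatrix L.C L.D N, fun x hx u hu => ?_⟩
  have hfst : L.fst (iterDyn f N x u) =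
      freeFst x + reachabilityMatrix L.C L.D N *ᵥ (fun p => u p.1 p.2) := by
    simp only [L.fst_iterDyn hf hx hu, reachabilityMatrix_mulVec, Matrix.mulVec_add,
      Finset.sum_add_distrib, freeFst, add_assoc]
  calc iterDyn f N x u
      = L.S *ᵥ L.fst (iterDyn f N x u) + L.r (L.snd (iterDyn f N x u)) :=
        L.readout _ (iterDyn_mem hf hx hu)
    _ = L.S *ᵥ freeFst x + L.r (L.h^[N] (L.snd x)) +
          (L.S * reachabilityMatrix L.C L.D N) *ᵥ (fun p => u p.1 p.2) := by
        rw [hfst, L.snd_iterDyn hf hx hu, Matrix.mulVec_add, Matrix.mulVec_mulVec,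
          add_right_comm]

/-- **Sufficiency of the CAP structure for ∞-step linear prediction.**  If a system
`x⁺ = f(x,u)` admits a control-affine preserved (CAP) structure, then it admits an
`N`-step linear predictor for every `N ≥ 1`. -/
theorem CAP_implies_infinite_step_linear_prediction
    {n m : ℕ} (f : (Fin n → ℝ) → (Fin m → ℝ) → (Fin n → ℝ))
    (X : Set (Fin n → ℝ)) (U : Set (Fin m → ℝ))
    (hf : ∀ x ∈ X, ∀ u ∈ U, f x u ∈ X)
    (hcap : HasCAP f X U) :
    ∀ N : ℕ, 1 ≤ N → HasNStepLinearPredictor f X U N := by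
  obtain ⟨_, _, ⟨L⟩⟩ := hcap.exists_capLift
  exact fun N _ => CAP_implies_infinite_step_linear_prediction_general hf L N
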